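/- arXiv:1607.07778 — 14 statements merged into one kernel-verified Lean document; each statement's English description precedes it below -/
import Mathlib

section
/- For each i, the ideal I_i ∩ R is a maximal ideal of the ring R, the quotient ring R/(I_i ∩ R) is isomorphic to k as a k-algebra, and for distinct indices i ≠ j one has I_i ∩ R ≠ I_j ∩ R. Hence the ideals I_1 ∩ R, ..., I_n ∩ R are n distinct closed points of Spec R. -/
/-!
The composite `k → R → R/(Iᵢ ∩ R)` is surjective because every element of `R` has the form `α + b`
with `α ∈ k`, `b ∈ Iᵢ`, and injective because `k` is a field and `Iᵢ` is proper. So the residue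
ring is `k`, and `Iᵢ ∩ R` is maximal. For distinctness, the Chinese remainder theorem gives `s ∈ S`
with `s ≡ 0` mod `Iᵢ` and `s ≡ 1` modulo every other `Iₗ`; this `s` is congruent to a constant
modulo each ideal, so it lies in `R`, and it is in `Iᵢ` but in no other `Iₗ`.
-/

/-- The subring `k + I = {α·1 + b : α ∈ k, b ∈ I}` of `S`, as a `k`-subalgebra. -/
def kPlus (k : Type*) {S : Type*} [CommSemiring k] [CommRing S] [Algebra k S]
    (I : Ideal S) : Subalgebra k S where
  carrier := {s | ∃ (α : k) (b : S), b ∈ I ∧ s = algebraMap k S α + b}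
  algebraMap_mem' := fun α => ⟨α, 0, I.zero_mem, by ring⟩
  add_mem' := by
    rintro x y ⟨α, b, hb, rfl⟩ ⟨β, c, hc, rfl⟩
    exact ⟨α + β, b + c, I.add_mem hb hc, by rw [map_add]; ring⟩
  mul_mem' := by
    rintro x y ⟨α, b, hb, rfl⟩ ⟨β, c, hc, rfl⟩
    refine ⟨α * β, algebraMap k S α * c + algebraMap k S β * b + b * c, ?_, by rw [map_mul]; ring⟩
    exact I.add_mem (I.add_mem (I.mul_mem_left _ hc) (I.mul_mem_left _ hb)) (I.mul_mem_left _ hc)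


/-- Each `Iᵢ ∩ R` is a maximal ideal of `R = ⋂ᵢ (k + Iᵢ)`, with residue ring
`R/(Iᵢ ∩ R)` isomorphic to `k` as a `k`-algebra, and the ideals `Iᵢ ∩ R` are pairwise
distinct; hence they give `n` distinct closed points of `Spec R`. -/
theorem stmt2 (k S : Type*) [Field k] [IsAlgClosed k] [CommRing S] [IsDomain S]
    [Algebra k S] [Algebra.FiniteType k S]
    (n : ℕ) (I : Fin n → Ideal S)
    (hproper : ∀ i, I i ≠ ⊤) (hnz : ∀ i, I i ≠ ⊥) (hnmax : ∀ i, ¬ (I i).IsMaximal)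
    (hcop : ∀ i j, i ≠ j → I i ⊔ I j = ⊤)
    (R : Subalgebra k S) (hR : R = ⨅ i, kPlus k (I i))
    (i : Fin n) :
    ((I i).comap R.val).IsMaximal ∧
    Nonempty ((R ⧸ (I i).comap R.val) ≃ₐ[k] k) ∧
    ∀ j, j ≠ i → (I i).comap R.val ≠ (I j).comap R.val := by
  subst hR
  set R : Subalgebra k S := ⨅ i, kPlus k (I i) with hR
  have hmem : ∀ s : S, s ∈ R ↔ ∀ l, ∃ (α : k) (b : S), b ∈ I l ∧ s = algebraMap k S α + b := by
    intro s
    rw [hR, Algebra.mem_iInf]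
    rfl
  have hne : (I i).comap R.val ≠ ⊤ := Ideal.comap_ne_top _ (hproper i)
  have : Nontrivial (R ⧸ (I i).comap R.val) := Ideal.Quotient.nontrivial_iff.mpr hne
  have hbij : Function.Bijective (Algebra.ofId k (R ⧸ (I i).comap R.val)) := by
    refine ⟨(Algebra.ofId k (R ⧸ (I i).comap R.val)).toRingHom.injective, fun x => ?_⟩
    obtain ⟨r, rfl⟩ := Ideal.Quotient.mk_surjective x
    obtain ⟨α, b, hb, hs⟩ := (hmem r).1 r.2 i
    refine ⟨α, ?_⟩
    change Ideal.Quotient.mk _ (algebraMap k R α) = _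
    rw [eq_comm, Ideal.Quotient.eq, Ideal.mem_comap]
    have : R.val (r - algebraMap k R α) = b := by
      change (r : S) - algebraMap k S α = b
      rw [hs]; ring
    rwa [this]
  let e := AlgEquiv.ofBijective _ hbij
  refine ⟨?_, ⟨e.symm⟩, fun j hj heq => ?_⟩
  · exact Ideal.Quotient.maximal_of_isField _
      (MulEquiv.isField (Field.toIsField k) e.symm.toMulEquiv)
  · obtain ⟨s, hs⟩ := Ideal.exists_forall_sub_mem_ideal (I := I)
      (fun a b hab => Ideal.isCoprime_iff_sup_eq.mpr (hcop a b hab))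
      (fun l => if l = i then 0 else 1)
    have hsi : s ∈ I i := by simpa using hs i
    have hsj : s - 1 ∈ I j := by simpa [hj] using hs j
    have hsR : s ∈ R := by
      refine (hmem s).2 fun l => ?_
      refine ⟨if l = i then 0 else 1, _, hs l, ?_⟩
      split_ifs <;> simp
    have hsj' : s ∈ I j := by
      have h : (⟨s, hsR⟩ : R) ∈ (I i).comap R.val := hsi
      rw [heq] at h
      exact h
    refine hproper j ((Ideal.eq_top_iff_one _).mpr ?_)
    simpa using (I j).sub_mem hsj' hsj
end

section
/- Let n be a maximal ideal of S that contains I_i for some i. Then R_{n∩R} ≠ S_n; more precisely, there exists an element c ∈ S (so c ∈ S_n) such that c does not lie in the localization R_{n∩R}, where both localizations are viewed as subrings of the fraction field of S. -/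
/-- The localization of the subalgebra `T ⊆ S` at (the complement in `T` of) the prime `P` of
`S`, viewed as a subset of the fraction field of `S`. -/
def locOf {k S : Type*} [CommSemiring k] [CommRing S] [IsDomain S] [Algebra k S]
    (T : Subalgebra k S) (P : Ideal S) : Set (FractionRing S) :=
  {x | ∃ a b : S, a ∈ T ∧ b ∈ T ∧ b ∉ P ∧
    x = algebraMap S (FractionRing S) a / algebraMap S (FractionRing S) b}

/-- The localization `S_P` of `S` at the prime `P`, viewed as a subset of the fraction field. -/
def locSAt (S : Type*) [CommRing S] [IsDomain S] (P : Ideal S) : Set (FractionRing S) :=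
  {x | ∃ a b : S, b ∉ P ∧
    x = algebraMap S (FractionRing S) a / algebraMap S (FractionRing S) b}

theorem exists_notMem_kPlus {k S : Type*} [Field k] [CommRing S] [Algebra k S] (I : Ideal S)
    (htop : I ≠ ⊤) (hmax : ¬ I.IsMaximal) : ∃ c : S, c ∉ kPlus k I := by
  by_contra! h
  refine hmax (Ideal.isMaximal_iff.2 ⟨(Ideal.ne_top_iff_one I).1 htop, ?_⟩)
  intro J x hIJ hxI hxJ
  obtain ⟨α, b, hb, rfl⟩ := h x
  have hα : α ≠ 0 := by
    rintro rfl
    exact hxI (by simpa using hb)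
  have hαJ : algebraMap k S α ∈ J := (J.add_mem_iff_left (hIJ hb)).1 hxJ
  have := J.mul_mem_left (algebraMap k S α⁻¹) hαJ
  rwa [← map_mul, inv_mul_cancel₀ hα, map_one] at this

/-- `k + I` is closed under those quotients in `S` whose denominator lies outside some ideal
`P ⊇ I`: the scalar part of such a denominator is nonzero, so it is a unit modulo `I`. -/
theorem mem_kPlus_of_mul_eq {k S : Type*} [Field k] [CommRing S] [Algebra k S] {I P : Ideal S}
    (hIP : I ≤ P) {a b c : S} (ha : a ∈ kPlus k I) (hb : b ∈ kPlus k I) (hbP : b ∉ P)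
    (h : c * b = a) : c ∈ kPlus k I := by
  obtain ⟨α, a', ha', rfl⟩ := ha
  obtain ⟨β, b', hb', rfl⟩ := hb
  have hβ : β ≠ 0 := by
    rintro rfl
    exact hbP (hIP (by simpa using hb'))
  have hinv : algebraMap k S β⁻¹ * algebraMap k S β = 1 := by
    rw [← map_mul, inv_mul_cancel₀ hβ, map_one]
  refine ⟨β⁻¹ * α, algebraMap k S β⁻¹ * (a' - c * b'),
    I.mul_mem_left _ (I.sub_mem ha' (I.mul_mem_left _ hb')), ?_⟩
  rw [map_mul]
  linear_combination (-c) * hinv + algebraMap k S β⁻¹ * h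

/-- If `n` is a maximal ideal of `S` containing some `Iᵢ`, then
`R_{n∩R} ≠ S_n`; more precisely, there is `c ∈ S` (so `c ∈ S_n`) with `c ∉ R_{n∩R}`,
where both localizations are viewed inside the fraction field of `S`. -/
theorem stmt3 (k S : Type*) [Field k] [IsAlgClosed k] [CommRing S] [IsDomain S]
    [Algebra k S] [Algebra.FiniteType k S]
    (m : ℕ) (I : Fin m → Ideal S)
    (hproper : ∀ i, I i ≠ ⊤) (hnz : ∀ i, I i ≠ ⊥) (hnmax : ∀ i, ¬ (I i).IsMaximal)
    (hcop : ∀ i j, i ≠ j → I i ⊔ I j = ⊤)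
    (R : Subalgebra k S) (hR : R = ⨅ i, kPlus k (I i))
    (n : Ideal S) (hn : n.IsMaximal) (i : Fin m) (hin : I i ≤ n) :
    locOf R n ≠ locSAt S n ∧
    ∃ c : S, algebraMap S (FractionRing S) c ∉ locOf R n := by
  obtain ⟨c, hc⟩ := exists_notMem_kPlus (k := k) (I i) (hproper i) (hnmax i)
  have hRi : R ≤ kPlus k (I i) := hR ▸ iInf_le _ i
  have key : algebraMap S (FractionRing S) c ∉ locOf R n := by
    rintro ⟨a, b, ha, hb, hbn, h⟩
    have hb0 : algebraMap S (FractionRing S) b ≠ 0 := by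
      rw [Ne, FaithfulSMul.algebraMap_eq_zero_iff]
      rintro rfl
      exact hbn n.zero_mem
    rw [eq_div_iff hb0, ← map_mul] at h
    exact hc (mem_kPlus_of_mul_eq hin (hRi ha) (hRi hb) hbn
      (FaithfulSMul.algebraMap_injective S (FractionRing S) h))
  refine ⟨fun heq => key ?_, c, key⟩
  rw [heq]
  exact ⟨c, 1, (Ideal.ne_top_iff_one n).1 hn.ne_top, by simp⟩
end

section
/- Let n be a maximal ideal of S that does not contain any of the ideals I_1, ..., I_n. Then R_{n∩R} = S_n as subrings of the fraction field of S; equivalently, every element of S_n can be written as a quotient a/b with a ∈ R and b ∈ R \ (n ∩ R). -/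
/-- If `n` is a maximal ideal of `S` containing none of the `Iᵢ`, then
`R_{n∩R} = S_n` as subrings of the fraction field of `S`: every element of `S_n` is a
quotient `a/b` with `a ∈ R` and `b ∈ R \ (n ∩ R)`. -/
theorem stmt4 (k S : Type*) [Field k] [IsAlgClosed k] [CommRing S] [IsDomain S]
    [Algebra k S] [Algebra.FiniteType k S]
    (m : ℕ) (I : Fin m → Ideal S)
    (hproper : ∀ i, I i ≠ ⊤) (hnz : ∀ i, I i ≠ ⊥) (hnmax : ∀ i, ¬ (I i).IsMaximal)
    (hcop : ∀ i j, i ≠ j → I i ⊔ I j = ⊤)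
    (R : Subalgebra k S) (hR : R = ⨅ i, kPlus k (I i))
    (n : Ideal S) (hn : n.IsMaximal) (h : ∀ i, ¬ I i ≤ n) :
    locOf R n = locSAt S n := by
  have hp : n.IsPrime := hn.isPrime
  choose c hcI hcn using fun i => Set.not_subset.mp (h i)
  have hc : ∏ i, c i ∉ n := fun hmem => by
    obtain ⟨i, -, hi⟩ := hp.prod_mem_iff.mp hmem
    exact hcn i hi
  -- Multiples of `∏ cᵢ` lie in every `Iᵢ`, hence in every `k + Iᵢ` with constant term `0`.
  have hcR : ∀ s : S, (∏ i, c i) * s ∈ R := fun s => by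
    rw [hR, Algebra.mem_iInf]
    exact fun i => ⟨0, (∏ i, c i) * s, (I i).mul_mem_right s
      ((I i).mem_of_dvd (Finset.dvd_prod_of_mem c (Finset.mem_univ i)) (hcI i)), by simp⟩
  ext x
  constructor
  · rintro ⟨a, b, -, -, hb, rfl⟩
    exact ⟨a, b, hb, rfl⟩
  · rintro ⟨a, b, hb, rfl⟩
    refine ⟨(∏ i, c i) * a, (∏ i, c i) * b, hcR a, hcR b,
      fun hmem => (hp.mem_or_mem hmem).elim hc hb, ?_⟩
    have hc0 : algebraMap S (FractionRing S) (∏ i, c i) ≠ 0 := fun h0 =>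
      hc ((FaithfulSMul.algebraMap_eq_zero_iff S (FractionRing S)).mp h0 ▸ n.zero_mem)
    rw [map_mul, map_mul, mul_div_mul_left _ _ hc0]
end

section
/- Let J be a proper ideal of R such that every maximal ideal n of S containing J (viewing J as a subset of S) contains some I_i; equivalently, Z(J) ∩ U_{S/R} = ∅. Then J ⊆ I_i for some index i. -/
/-- If `K` is an ideal of `S` contained in the subring `R`, then `K · JS ⊆ J` for every ideal `J`
of `R`. -/
theorem mul_mem_of_mem_map {k S : Type*} [Field k] [CommRing S] [Algebra k S]
    (R : Subalgebra k S) (J : Ideal R) (K : Ideal S) (hK : ∀ c ∈ K, c ∈ R)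
    {z : S} (hz : z ∈ J.map (algebraMap R S)) :
    ∀ c ∈ K, ∃ y ∈ J, (y : S) = c * z := by
  refine Submodule.span_induction (p := fun z _ => ∀ c ∈ K, ∃ y ∈ J, (y : S) = c * z)
    ?_ ?_ ?_ ?_ hz
  · rintro _ ⟨x, hx, rfl⟩ c hc
    exact ⟨⟨c, hK c hc⟩ * x, J.mul_mem_left _ hx, rfl⟩
  · intro c _
    exact ⟨0, J.zero_mem, by simp⟩
  · intro x y _ _ hx hy c hc
    obtain ⟨u, hu, hu'⟩ := hx c hc
    obtain ⟨v, hv, hv'⟩ := hy c hc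
    exact ⟨u + v, J.add_mem hu hv, by push_cast; rw [hu', hv', mul_add]⟩
  · intro a x _ hx c hc
    obtain ⟨u, hu, hu'⟩ := hx (c * a) (K.mul_mem_right a hc)
    exact ⟨u, hu, by rw [hu', smul_eq_mul, mul_assoc]⟩

/-- If `J` is a proper ideal of `R = ⋂ᵢ (k + Iᵢ)` such that every maximal ideal
of `S` containing `J` (viewed in `S`) contains some `Iᵢ` (i.e. `Z(J) ∩ U_{S/R} = ∅`), then
`J ⊆ Iᵢ` for some `i`. -/
theorem stmt5 (k S : Type*) [Field k] [IsAlgClosed k] [CommRing S] [IsDomain S]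
    [Algebra k S] [Algebra.FiniteType k S]
    (m : ℕ) (I : Fin m → Ideal S)
    (hproper : ∀ i, I i ≠ ⊤) (hnz : ∀ i, I i ≠ ⊥) (hnmax : ∀ i, ¬ (I i).IsMaximal)
    (hcop : ∀ i j, i ≠ j → I i ⊔ I j = ⊤)
    (R : Subalgebra k S) (hR : R = ⨅ i, kPlus k (I i))
    (J : Ideal R) (hJ : J ≠ ⊤)
    (h : ∀ n : Ideal S, n.IsMaximal → (∀ x : R, x ∈ J → (x : S) ∈ n) → ∃ i, I i ≤ n) :
    ∃ i, ∀ x : R, x ∈ J → (x : S) ∈ I i := by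
  classical
  by_contra! hcon
  choose x hxJ hxI using hcon
  have hmem : ∀ {s : S}, s ∈ R ↔ ∀ i, ∃ (α : k) (b : S), b ∈ I i ∧ s = algebraMap k S α + b := by
    intro s
    rw [hR, Algebra.mem_iInf]
    exact Iff.rfl
  choose α b hb hxe using fun i => hmem.1 (x i).2 i
  have hα : ∀ i, α i ≠ 0 := by
    intro i h0
    apply hxI i
    rw [hxe i, h0, map_zero, zero_add]
    exact hb i
  have hJS : J.map (algebraMap R S) = ⊤ := by
    by_contra hne
    obtain ⟨n, hn, hle⟩ := Ideal.exists_le_maximal _ hne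
    have hJn : ∀ x : R, x ∈ J → (x : S) ∈ n := fun x hx => hle (Ideal.mem_map_of_mem _ hx)
    obtain ⟨i, hi⟩ := h n hn hJn
    have h1 : algebraMap k S (α i) ∈ n := by
      have := n.sub_mem (hJn _ (hxJ i)) (hi (hb i))
      rwa [hxe i, add_sub_cancel_right] at this
    exact hn.ne_top (n.eq_top_of_isUnit_mem h1 ((hα i).isUnit.map _))
  have hK : ∀ c ∈ ⨅ i, I i, c ∈ R := fun c hc =>
    hmem.2 fun i => ⟨0, c, (Ideal.mem_iInf.1 hc) i, by simp⟩
  have hcop' : Pairwise fun i j => IsCoprime (I i) (I j) := fun i j hij =>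
    Ideal.isCoprime_iff_sup_eq.2 (hcop i j hij)
  choose e he using fun i : Fin m =>
    Ideal.exists_forall_sub_mem_ideal hcop' (fun j => if j = i then (1 : S) else 0)
  have heR : ∀ i, e i ∈ R := fun i => hmem.2 fun j =>
    ⟨if j = i then 1 else 0, _, he i j, by split_ifs <;> simp⟩
  let y : R := ∑ i, (algebraMap k R (α i)⁻¹ * ⟨e i, heR i⟩) * x i
  have hyJ : y ∈ J := J.sum_mem fun i _ => J.mul_mem_left _ (hxJ i)
  have hy : (y : S) = ∑ i, algebraMap k S (α i)⁻¹ * e i * (x i : S) := by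
    simp only [y, AddSubmonoidClass.coe_finsetSum, MulMemClass.coe_mul]
    rfl
  have hyK : 1 - (y : S) ∈ ⨅ i, I i := by
    refine Ideal.mem_iInf.2 fun j => ?_
    rw [← Ideal.Quotient.eq_zero_iff_mem, map_sub, map_one, hy, map_sum, Finset.sum_eq_single j]
    · have h1 : Ideal.Quotient.mk (I j) (e j) = 1 := by
        simpa using Ideal.Quotient.eq.2 (he j j)
      have h2 : Ideal.Quotient.mk (I j) (x j : S) =
          Ideal.Quotient.mk (I j) (algebraMap k S (α j)) := by
        rw [hxe j, map_add, Ideal.Quotient.eq_zero_iff_mem.2 (hb j), add_zero]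
      rw [map_mul, map_mul, h1, h2, mul_one, ← map_mul, ← map_mul, inv_mul_cancel₀ (hα j),
        map_one, map_one, sub_self]
    · intro i _ hij
      have h1 : Ideal.Quotient.mk (I j) (e i) = 0 := by
        have := Ideal.Quotient.eq.2 (he i j)
        rwa [if_neg hij.symm, map_zero] at this
      rw [map_mul, map_mul, h1, mul_zero, zero_mul]
    · simp
  obtain ⟨z, hz, hz'⟩ := mul_mem_of_mem_map R J _ hK (hJS ▸ Submodule.mem_top : (1 : S) ∈ _) _ hyK
  refine hJ ((Ideal.eq_top_iff_one J).2 ?_)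
  have : (1 : R) = z + y := Subtype.ext (by push_cast; rw [hz']; ring)
  rw [this]
  exact J.add_mem hz hyJ
end

section
/- For each index i, the localization of R at the maximal ideal I_i ∩ R equals the localization of the ring k + I_i at its maximal ideal I_i; that is, R_{I_i ∩ R} = (k + I_i)_{I_i} as subrings of the fraction field of S. -/
/-- For each `i`, `R_{Iᵢ ∩ R} = (k + Iᵢ)_{Iᵢ}` as subrings of the fraction
field of `S`. -/
theorem stmt6 (k S : Type*) [Field k] [IsAlgClosed k] [CommRing S] [IsDomain S]
    [Algebra k S] [Algebra.FiniteType k S]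
    (m : ℕ) (I : Fin m → Ideal S)
    (hproper : ∀ i, I i ≠ ⊤) (hnz : ∀ i, I i ≠ ⊥) (hnmax : ∀ i, ¬ (I i).IsMaximal)
    (hcop : ∀ i j, i ≠ j → I i ⊔ I j = ⊤)
    (R : Subalgebra k S) (hR : R = ⨅ i, kPlus k (I i))
    (i : Fin m) :
    locOf R (I i) = locOf (kPlus k (I i)) (I i) := by
  have hle : R ≤ kPlus k (I i) := hR ▸ iInf_le _ i
  apply Set.Subset.antisymm
  · rintro x ⟨a, b, ha, hb, hbP, rfl⟩
    exact ⟨a, b, hle ha, hle hb, hbP, rfl⟩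
  · have hsup : I i ⊔ ⨅ j ∈ Finset.univ.erase i, I j = ⊤ :=
      Ideal.sup_iInf_eq_top fun j hj => hcop i j (Finset.ne_of_mem_erase hj).symm
    obtain ⟨f, hf, e, he, hfe⟩ := Submodule.mem_sup.1
      ((Ideal.eq_top_iff_one _).1 hsup)
    have heJ : ∀ j, j ≠ i → e ∈ I j := fun j hj => by
      simp only [Submodule.mem_iInf] at he
      exact he j (Finset.mem_erase.2 ⟨hj, Finset.mem_univ j⟩)
    -- From here on the element `e` of the overview is written `1 - f`, with `f ∈ Iᵢ`.
    obtain rfl : e = 1 - f := by rw [← hfe]; ring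
    have he0 : 1 - f ≠ 0 := fun h =>
      hproper i ((Ideal.eq_top_iff_one _).2 (by rwa [← sub_eq_zero.1 h] at hf))
    have hmem : ∀ a ∈ kPlus k (I i), a * (1 - f) ∈ R := by
      rintro _ ⟨α, b, hb, rfl⟩
      rw [hR, Algebra.mem_iInf]
      intro j
      by_cases hj : j = i
      · subst hj
        exact ⟨α, b - (algebraMap k S α + b) * f,
          (I j).sub_mem hb ((I j).mul_mem_left _ hf), by ring⟩
      · exact ⟨0, _, (I j).mul_mem_left _ (heJ j hj), by rw [map_zero, zero_add]⟩
    rintro x ⟨a, b, ha, hb, hbP, rfl⟩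
    refine ⟨a * (1 - f), b * (1 - f), hmem a ha, hmem b hb, fun h => hbP ?_, ?_⟩
    · have := (I i).add_mem h ((I i).mul_mem_left b hf)
      rwa [← mul_add, sub_add_cancel, mul_one] at this
    · rw [map_mul, map_mul, mul_div_mul_right]
      exact (map_ne_zero_iff _ (IsFractionRing.injective S (FractionRing S))).2 he0
end

section
/- Suppose I is a radical ideal of S such that the Krull dimension of the quotient ring S/I is 0. Then the ring k + I is noetherian. -/
theorem finite_over_kPlus (k S : Type*) [Field k] [CommRing S] [Algebra k S] (I : Ideal S)
    [Module.Finite k (S ⧸ I)] : Module.Finite (kPlus k I) S := by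
  classical
  obtain ⟨T, hT⟩ := (Module.Finite.fg_top : (⊤ : Submodule k (S ⧸ I)).FG)
  let f : S →ₗ[k] S ⧸ I := (Ideal.Quotient.mkₐ k I).toLinearMap
  have hf : Function.Surjective f := Ideal.Quotient.mk_surjective
  let N : Submodule k S := Submodule.span k (Function.surjInv hf '' T)
  have hN : N.map f = ⊤ := by
    rw [Submodule.map_span, Set.image_image]
    simp only [Function.surjInv_eq hf, Set.image_id', hT]
  refine ⟨⟨insert 1 (T.image (Function.surjInv hf)), ?_⟩⟩
  rw [eq_top_iff]
  rintro s -
  obtain ⟨n, hn, hns⟩ : f s ∈ N.map f := hN ▸ Submodule.mem_top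
  have hI : s - n ∈ I := Ideal.Quotient.eq.mp hns.symm
  rw [← sub_add_cancel s n]
  refine Submodule.add_mem _ ?_ ?_
  · have hmem : s - n ∈ kPlus k I := ⟨0, s - n, hI, by simp⟩
    have h1 : s - n = (⟨s - n, hmem⟩ : kPlus k I) • (1 : S) := (mul_one _).symm
    rw [h1]
    exact Submodule.smul_mem _ _ (Submodule.subset_span (by simp))
  · refine Submodule.span_le_restrictScalars k (kPlus k I) _ (Submodule.span_mono ?_ hn)
    rw [Finset.coe_insert, Finset.coe_image]
    exact Set.subset_insert _ _

/-- If `I` is a radical ideal of `S` with `dim S/I = 0`, then the ring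
`k + I` is noetherian. -/
theorem stmt7 (k S : Type*) [Field k] [IsAlgClosed k] [CommRing S] [IsDomain S]
    [Algebra k S] [Algebra.FiniteType k S]
    (I : Ideal S) (hrad : I.IsRadical) (hdim : ringKrullDim (S ⧸ I) = 0) :
    IsNoetherianRing (kPlus k I) := by
  have : Module.Finite k (S ⧸ I) := by
    rw [Module.finite_iff_krullDimLE_zero, Ring.krullDimLE_iff, hdim, Nat.cast_zero]
  have hfin := finite_over_kPlus k S I
  have : Algebra.FiniteType k (kPlus k I) :=
    ⟨fg_of_fg_of_fg k (kPlus k I) S Algebra.FiniteType.out hfin.fg_top Subtype.val_injective⟩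
  exact Algebra.FiniteType.isNoetherianRing k (kPlus k I)
end

section
/- Suppose each I_i is a radical ideal of S and the Krull dimension of S/I_i is 0 for every i. Then R = ⋂_i (k + I_i) is a noetherian ring. -/
open Polynomial

/-- If every `S ⧸ I i` is integral over `k`, then `S` is integral over `⋂ i, (k + I i)`. -/
theorem isIntegral_iInf_kPlus {k S ι : Type*} [Field k] [CommRing S] [Nontrivial S] [Algebra k S]
    [Fintype ι]
    (I : ι → Ideal S) (hI : ∀ i, Algebra.IsIntegral k (S ⧸ I i)) (s : S) :
    IsIntegral (⨅ i, kPlus k (I i) : Subalgebra k S) s := by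
  have h : ∀ i, ∃ p : k[X], p.Monic ∧ aeval s p ∈ I i := by
    intro i
    obtain ⟨p, hp, hps⟩ := (hI i).isIntegral (Ideal.Quotient.mk (I i) s)
    refine ⟨p, hp, ?_⟩
    rw [← Ideal.Quotient.eq_zero_iff_mem, ← Ideal.Quotient.mkₐ_eq_mk k, ← aeval_algHom_apply]
    exact hps
  choose p hp hps using h
  -- The factor `X` keeps the degree positive when every `p i` is `1`, e.g. for empty `ι`.
  let q : k[X] := X * ∏ i, p i
  have hprod : (∏ i, p i).Monic := monic_prod_of_monic _ _ fun i _ => hp i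
  have hq : q.Monic := monic_X.mul hprod
  have hdeg : q.natDegree ≠ 0 := by
    rw [monic_X.natDegree_mul hprod, natDegree_X]
    lia
  have hmem : aeval s q ∈ (⨅ i, kPlus k (I i) : Subalgebra k S) := by
    rw [Algebra.mem_iInf]
    intro i
    refine ⟨0, aeval s q, ?_, by simp⟩
    have hdvd : p i ∣ q := (Finset.dvd_prod_of_mem p (Finset.mem_univ i)).mul_left X
    exact Ideal.mem_of_dvd _ (map_dvd (aeval s) hdvd) (hps i)
  refine IsIntegral.of_aeval_monic (p := q.map (algebraMap k _)) (hq.map _) ?_ ?_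
  · rwa [hq.natDegree_map]
  · rw [aeval_map_algebraMap]
    exact isIntegral_algebraMap (x := (⟨aeval s q, hmem⟩ : (⨅ i, kPlus k (I i) : Subalgebra k S)))

/-- If each `Iᵢ` is a radical ideal of `S` with `dim S/Iᵢ = 0`, then
`R = ⋂ᵢ (k + Iᵢ)` is a noetherian ring. -/
theorem stmt8 (k S : Type*) [Field k] [IsAlgClosed k] [CommRing S] [IsDomain S]
    [Algebra k S] [Algebra.FiniteType k S]
    (m : ℕ) (I : Fin m → Ideal S)
    (hproper : ∀ i, I i ≠ ⊤) (hnz : ∀ i, I i ≠ ⊥) (hnmax : ∀ i, ¬ (I i).IsMaximal)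
    (hcop : ∀ i j, i ≠ j → I i ⊔ I j = ⊤)
    (hrad : ∀ i, (I i).IsRadical) (hdim : ∀ i, ringKrullDim (S ⧸ I i) = 0)
    (R : Subalgebra k S) (hR : R = ⨅ i, kPlus k (I i)) :
    IsNoetherianRing R := by
  subst hR
  have hint : ∀ i, Algebra.IsIntegral k (S ⧸ I i) := by
    intro i
    have hle : Ring.KrullDimLE 0 (S ⧸ I i) := Ring.krullDimLE_iff.mpr (by simp [hdim i])
    have hfin : Module.Finite k (S ⧸ I i) := (Module.finite_iff_krullDimLE_zero k _).mpr hle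
    infer_instance
  let R : Subalgebra k S := ⨅ i, kPlus k (I i)
  have hRS : Algebra.IsIntegral R S := ⟨isIntegral_iInf_kPlus I hint⟩
  have hft : Algebra.FiniteType R S := .of_restrictScalars_finiteType k R S
  have hfin : Module.Finite R S := Algebra.IsIntegral.finite
  have hkR : Algebra.FiniteType k R :=
    ⟨fg_of_fg_of_fg k R S Algebra.FiniteType.out hfin.fg_top Subtype.val_injective⟩
  exact Algebra.FiniteType.isNoetherianRing k R
end

section
/- Suppose I_i is a radical ideal of S and the Krull dimension of S/I_i is 0. Then the localization R_{I_i ∩ R} of R at the maximal ideal I_i ∩ R is a noetherian ring. -/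
/-- If `R ⊆ A` with `A` noetherian and some `c ∈ M` satisfies `c A ⊆ R`, then `M⁻¹R` is noetherian,
because `M⁻¹R = M⁻¹A`. -/
theorem isNoetherianRing_localization_of_conductor {R A : Type*} [CommRing R] [CommRing A]
    [Algebra R A] [IsNoetherianRing A] (hinj : Function.Injective (algebraMap R A))
    (M : Submonoid R) (c : R) (hc : c ∈ M)
    (h : ∀ a : A, ∃ r, algebraMap R A r = algebraMap R A c * a) :
    IsNoetherianRing (Localization M) := by
  let N := Algebra.algebraMapSubmonoid A M
  have : IsNoetherianRing (Localization N) :=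
    IsLocalization.isNoetherianRing N _ inferInstance
  have hloc : IsLocalization M (Localization N) := by
    refine ⟨?_, ?_, ?_⟩
    · intro y
      rw [IsScalarTower.algebraMap_apply R A (Localization N)]
      exact IsLocalization.map_units (Localization N)
        (⟨algebraMap R A y, Algebra.mem_algebraMapSubmonoid_of_mem y⟩ : N)
    · intro z
      obtain ⟨⟨a, ⟨_, s, hs, rfl⟩⟩, hz⟩ := IsLocalization.surj N z
      obtain ⟨r, hr⟩ := h a
      -- `a / s = (c a) / (c s)`, and `c a` lies in `R`
      refine ⟨⟨r, ⟨c * s, M.mul_mem hc hs⟩⟩, ?_⟩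
      simp only [IsScalarTower.algebraMap_apply R A (Localization N), hr, map_mul] at hz ⊢
      rw [← hz]
      ring
    · intro x y hxy
      rw [IsScalarTower.algebraMap_apply R A (Localization N),
        IsScalarTower.algebraMap_apply R A (Localization N)] at hxy
      obtain ⟨⟨_, s, hs, rfl⟩, hsxy⟩ := IsLocalization.exists_of_eq (M := N) hxy
      refine ⟨⟨s, hs⟩, hinj ?_⟩
      simpa only [map_mul] using hsxy
  exact isNoetherianRing_of_ringEquiv (Localization N)
    (IsLocalization.algEquiv M (Localization N) (Localization M)).toRingEquiv

/-- `S` is generated as a `(k + I)`-module by `1` and lifts of a finite `k`-spanning set of `S/I`, so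
Artin–Tate applies to `k ⊆ k + I ⊆ S`. -/
theorem isNoetherianRing_kPlus (k : Type*) {S : Type*} [Field k] [CommRing S] [Algebra k S]
    [Algebra.FiniteType k S] (I : Ideal S) (hdim : ringKrullDim (S ⧸ I) = 0) :
    IsNoetherianRing (kPlus k I) := by
  have : Ring.KrullDimLE 0 (S ⧸ I) := Ring.krullDimLE_iff.mpr (by simp [hdim])
  have hfin : Module.Finite k (S ⧸ I) := (Module.finite_iff_krullDimLE_zero k (S ⧸ I)).mpr this
  have hS : (⊤ : Submodule (kPlus k I) S).FG := by
    classical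
    obtain ⟨T, hT⟩ := Module.Finite.fg_top (R := k) (M := S ⧸ I)
    let g : S ⧸ I → S := Function.surjInv Ideal.Quotient.mk_surjective
    have hg (y : S ⧸ I) : Ideal.Quotient.mk I (g y) = y := Function.surjInv_eq _ y
    refine ⟨insert 1 (T.image g), ?_⟩
    set P := Submodule.span (kPlus k I) ((insert 1 (T.image g) : Finset S) : Set S) with hP
    have h1 : (1 : S) ∈ P := Submodule.subset_span (by simp)
    have hI (b : S) (hb : b ∈ I) : b ∈ P := by
      have := P.smul_mem (⟨b, 0, b, hb, by simp⟩ : kPlus k I) h1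
      simpa [Subalgebra.smul_def] using this
    have key (y : S ⧸ I) (hy : y ∈ Submodule.span k (T : Set (S ⧸ I))) :
        ∃ x ∈ P, Ideal.Quotient.mk I x = y := by
      induction hy using Submodule.span_induction with
      | mem y hy =>
        exact ⟨g y, Submodule.subset_span (by
          simpa using Or.inr ⟨y, hy, rfl⟩), hg y⟩
      | zero => exact ⟨0, P.zero_mem, map_zero _⟩
      | add y z _ _ hy hz =>
        obtain ⟨x, hx, rfl⟩ := hy
        obtain ⟨w, hw, rfl⟩ := hz
        exact ⟨x + w, P.add_mem hx hw, map_add _ _ _⟩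
      | smul α y _ hy =>
        obtain ⟨x, hx, rfl⟩ := hy
        refine ⟨α • x, ?_, rfl⟩
        have := P.smul_mem (algebraMap k (kPlus k I) α) hx
        rwa [algebraMap_smul] at this
    refine eq_top_iff.mpr fun x _ => ?_
    obtain ⟨w, hw, hwx⟩ := key (Ideal.Quotient.mk I x) (hT ▸ Submodule.mem_top)
    have := P.add_mem hw (hI (x - w) (Ideal.Quotient.eq.mp hwx.symm))
    simpa using this
  have hA := fg_of_fg_of_fg k (kPlus k I) S Algebra.FiniteType.out hS Subtype.val_injective
  have : Algebra.FiniteType k (kPlus k I) := ⟨hA⟩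
  exact Algebra.FiniteType.isNoetherianRing k _

/-- If `Iᵢ` is a radical ideal of `S` with `dim S/Iᵢ = 0`, then the localization
of `R = ⋂ᵢ (k + Iᵢ)` at the maximal ideal `Iᵢ ∩ R` is a noetherian ring. -/
theorem stmt9 (k S : Type*) [Field k] [IsAlgClosed k] [CommRing S] [IsDomain S]
    [Algebra k S] [Algebra.FiniteType k S]
    (m : ℕ) (I : Fin m → Ideal S)
    (hproper : ∀ i, I i ≠ ⊤) (hnz : ∀ i, I i ≠ ⊥) (hnmax : ∀ i, ¬ (I i).IsMaximal)
    (hcop : ∀ i j, i ≠ j → I i ⊔ I j = ⊤)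
    (R : Subalgebra k S) (hR : R = ⨅ i, kPlus k (I i))
    (i : Fin m) (hrad : (I i).IsRadical) (hdim : ringKrullDim (S ⧸ I i) = 0)
    (hmax : ((I i).comap R.val).IsMaximal) :
    IsNoetherianRing
      (Localization (@Ideal.primeCompl _ _ ((I i).comap R.val) hmax.isPrime)) := by
  subst hR
  have hle : (⨅ j, kPlus k (I j)) ≤ kPlus k (I i) := iInf_le _ i
  let f := (Subalgebra.inclusion hle).toRingHom
  let _ : Algebra (⨅ j, kPlus k (I j) : Subalgebra k S) (kPlus k (I i)) := f.toAlgebra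
  have : IsNoetherianRing (kPlus k (I i)) := isNoetherianRing_kPlus k (I i) hdim
  have hsup : I i ⊔ ⨅ j ∈ Finset.univ.erase i, I j = ⊤ :=
    Ideal.sup_iInf_eq_top fun j hj => hcop i j (Finset.ne_of_mem_erase hj).symm
  -- `c` lies in every `Iⱼ` with `j ≠ i` and is congruent to `1` modulo `Iᵢ`
  obtain ⟨b, hb, c, hc, hbc⟩ := Submodule.mem_sup.mp ((Ideal.eq_top_iff_one _).mp hsup)
  have hcj (j : Fin m) (hj : j ≠ i) : c ∈ I j := by
    simp only [Ideal.mem_iInf] at hc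
    exact hc j (Finset.mem_erase.mpr ⟨hj, Finset.mem_univ j⟩)
  have hci : c ∈ kPlus k (I i) :=
    ⟨1, -b, (I i).neg_mem hb, by rw [map_one, ← hbc]; ring⟩
  have hcA (a : S) (ha : a ∈ kPlus k (I i)) : c * a ∈ ⨅ j, kPlus k (I j) := by
    refine Algebra.mem_iInf.mpr fun j => ?_
    by_cases hj : j = i
    · subst hj
      exact mul_mem hci ha
    · exact ⟨0, c * a, (I j).mul_mem_right _ (hcj j hj), by simp⟩
  have hcR : c ∈ ⨅ j, kPlus k (I j) := by simpa using hcA 1 (one_mem _)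
  refine isNoetherianRing_localization_of_conductor (A := kPlus k (I i))
    (Subalgebra.inclusion_injective hle) _ ⟨c, hcR⟩ ?_ ?_
  · intro hcI
    have hcI' : c ∈ I i := hcI
    exact hproper i ((Ideal.eq_top_iff_one _).mpr (hbc ▸ (I i).add_mem hb hcI'))
  · exact fun a => ⟨⟨c * a, hcA a a.2⟩, rfl⟩
end

section
/- Suppose I is a nonzero ideal of S such that the Krull dimension of S/I is at least 1. Then the ring R = k + I is nonnoetherian; moreover, there exists a strictly increasing infinite ascending chain of ideals of R all of which are contained in I. -/
section

variable {k S : Type*} [Field k] [CommRing S] [Algebra k S] (I : Ideal S)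

/-- `I` regarded as an ideal of `k + I`. -/
def idealInKPlus (k : Type*) {S : Type*} [Field k] [CommRing S] [Algebra k S]
    (I : Ideal S) : Ideal (kPlus k I) :=
  I.comap (kPlus k I).val.toRingHom

/-- Multiplication by a nonzero element of `I` embeds `S` into `I`, linearly over `k + I`. -/
lemma isNoetherian_of_ideal [IsDomain S] (hnz : I ≠ ⊥)
    (h : IsNoetherian (kPlus k I) (idealInKPlus k I)) : IsNoetherian (kPlus k I) S := by
  obtain ⟨b, hb, hb0⟩ := Submodule.exists_mem_ne_zero_of_ne_bot hnz
  let f : S →ₗ[kPlus k I] idealInKPlus k I :=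
    { toFun := fun s => ⟨⟨s * b, 0, s * b, I.mul_mem_left _ hb, by simp⟩, I.mul_mem_left _ hb⟩
      map_add' := fun x y => Subtype.ext (Subtype.ext (add_mul x y b))
      map_smul' := fun r x => Subtype.ext (Subtype.ext (mul_assoc (r : S) x b)) }
  refine isNoetherian_of_injective f fun x y hxy => ?_
  have : x * b = y * b := congrArg (fun z : idealInKPlus k I => ((z : kPlus k I) : S)) hxy
  exact mul_right_cancel₀ hb0 this

/-- Generators of `S` over `k + I` have images spanning `S ⧸ I` over `k`, because `I` kills
`S ⧸ I`. -/
lemma finite_quotient (h : Module.Finite (kPlus k I) S) : Module.Finite k (S ⧸ I) := by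
  classical
  obtain ⟨T, hT⟩ := h.fg_top
  refine ⟨⟨T.image (Ideal.Quotient.mk I), ?_⟩⟩
  rw [eq_top_iff]
  rintro x -
  obtain ⟨s, rfl⟩ := Ideal.Quotient.mk_surjective x
  have hs : s ∈ Submodule.span (kPlus k I) (T : Set S) := hT ▸ Submodule.mem_top
  induction hs using Submodule.span_induction with
  | mem t ht => exact Submodule.subset_span (by simpa using ⟨t, ht, rfl⟩)
  | zero => simp
  | add x y _ _ hx hy => rw [map_add]; exact add_mem hx hy
  | smul r x _ hx =>
    obtain ⟨_, α, b, hb, rfl⟩ := r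
    have key : Ideal.Quotient.mk I ((algebraMap k S α + b) * x)
        = α • Ideal.Quotient.mk I x := by
      rw [map_mul, map_add, Ideal.Quotient.eq_zero_iff_mem.mpr hb, add_zero, Algebra.smul_def]
      rfl
    exact key ▸ Submodule.smul_mem _ α hx

end

/-- If `I` is a nonzero ideal of `S` with `dim S/I ≥ 1`, then `R = k + I` is
nonnoetherian; moreover `I` contains a strictly increasing infinite ascending chain of
ideals of `R`. -/
theorem stmt10 (k S : Type*) [Field k] [IsAlgClosed k] [CommRing S] [IsDomain S]
    [Algebra k S] [Algebra.FiniteType k S]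
    (I : Ideal S) (hnz : I ≠ ⊥) (hdim : 1 ≤ ringKrullDim (S ⧸ I)) :
    ¬ IsNoetherianRing (kPlus k I) ∧
    ∃ J : ℕ → Ideal (kPlus k I), StrictMono J ∧
      ∀ (ℓ : ℕ) (x : kPlus k I), x ∈ J ℓ → (x : S) ∈ I := by
  have hm : ¬ IsNoetherian (kPlus k I) (idealInKPlus k I) := by
    intro h
    have := isNoetherian_of_ideal I hnz h
    have : Module.Finite k (S ⧸ I) := finite_quotient I inferInstance
    have : IsArtinianRing (S ⧸ I) := IsArtinianRing.of_finite k _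
    have h0 : ringKrullDim (S ⧸ I) ≤ 0 := mod_cast Ring.krullDimLE_iff.mp inferInstance
    exact absurd (hdim.trans h0) (by decide)
  refine ⟨fun h => hm inferInstance, ?_⟩
  have hwf := mt isNoetherian_iff'.mpr hm
  rw [WellFoundedGT, isWellFounded_iff, RelEmbedding.wellFounded_iff_isEmpty, not_isEmpty_iff] at hwf
  obtain ⟨f⟩ := hwf
  refine ⟨fun n => (f n).map (idealInKPlus k I).subtype, fun a b hab =>
    Submodule.map_strictMono_of_injective (Submodule.injective_subtype _) (f.map_rel_iff.mpr hab), ?_⟩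
  rintro ℓ _ ⟨y, -, rfl⟩
  exact y.2
end

section
/- Suppose the Krull dimension of S/I_i is at least 1 for some index i. Then R = ⋂_i (k + I_i) is a nonnoetherian ring. -/
/-- A domain `S` is finite over a noetherian subring `R` that contains a nonzero principal ideal
`a S` of `S`: multiplication by `a` is an injective `R`-linear map from `S` to `R`. -/
lemma finite_of_conductor {k S : Type*} [Field k] [CommRing S] [IsDomain S] [Algebra k S]
    (R : Subalgebra k S) [IsNoetherianRing R] (a : S) (ha : a ≠ 0) (haR : ∀ s, a * s ∈ R) :
    Module.Finite R S := by
  let f : S →ₗ[R] R :=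
    { toFun := fun s => ⟨a * s, haR s⟩
      map_add' := fun x y => Subtype.ext (mul_add a x y)
      map_smul' := fun r x => Subtype.ext (by
        change a * ((r : S) * x) = (r : S) * (a * x)
        ring) }
  refine Module.Finite.of_injective f fun x y h => ?_
  exact mul_left_cancel₀ ha (congrArg Subtype.val h)

/-- If `S` is finite over a subalgebra of `k + I`, then `S ⧸ I` is finite over `k`, because
generators of `S` map to generators of `S ⧸ I`. -/
lemma finite_quotient_s11 {k S : Type*} [Field k] [CommRing S] [Algebra k S]
    (R : Subalgebra k S) (I : Ideal S) (hRI : R ≤ kPlus k I) [hf : Module.Finite R S] :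
    Module.Finite k (S ⧸ I) := by
  classical
  obtain ⟨t, ht⟩ := hf.fg_top
  refine ⟨⟨t.image (Ideal.Quotient.mk I), ?_⟩⟩
  rw [eq_top_iff]
  rintro x -
  obtain ⟨s, rfl⟩ := Ideal.Quotient.mk_surjective x
  have hs : s ∈ Submodule.span R (t : Set S) := ht ▸ Submodule.mem_top
  induction hs using Submodule.span_induction with
  | mem x hx => exact Submodule.subset_span (by simpa using ⟨x, hx, rfl⟩)
  | zero => simp
  | add x y _ _ hx hy => rw [map_add]; exact Submodule.add_mem _ hx hy
  | smul r x _ hx =>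
    obtain ⟨α, b, hb, hr⟩ := hRI r.2
    have h : Ideal.Quotient.mk I (r • x) = α • Ideal.Quotient.mk I x := by
      rw [Subalgebra.smul_def, smul_eq_mul, hr, map_mul, map_add,
        Ideal.Quotient.eq_zero_iff_mem.2 hb, add_zero, Algebra.smul_def]
      rfl
    rw [h]
    exact Submodule.smul_mem _ _ hx

/-- If `dim S/Iᵢ ≥ 1` for some `i`, then `R = ⋂ᵢ (k + Iᵢ)` is nonnoetherian. -/
theorem stmt11 (k S : Type*) [Field k] [IsAlgClosed k] [CommRing S] [IsDomain S]
    [Algebra k S] [Algebra.FiniteType k S]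
    (m : ℕ) (I : Fin m → Ideal S)
    (hproper : ∀ i, I i ≠ ⊤) (hnz : ∀ i, I i ≠ ⊥) (hnmax : ∀ i, ¬ (I i).IsMaximal)
    (hcop : ∀ i j, i ≠ j → I i ⊔ I j = ⊤)
    (R : Subalgebra k S) (hR : R = ⨅ i, kPlus k (I i))
    (hdim : ∃ i, 1 ≤ ringKrullDim (S ⧸ I i)) :
    ¬ IsNoetherianRing R := by
  intro hN
  obtain ⟨i, hi⟩ := hdim
  have hJ : (∏ j, I j) ≠ ⊥ := Finset.prod_ne_zero_iff.2 fun j _ => hnz j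
  obtain ⟨a, haJ, ha⟩ := Submodule.exists_mem_ne_zero_of_ne_bot hJ
  have haR : ∀ s, a * s ∈ R := fun s => by
    rw [hR, Algebra.mem_iInf]
    intro j
    have haj : a ∈ I j := Ideal.prod_le_inf.trans (Finset.inf_le (Finset.mem_univ j)) haJ
    exact ⟨0, a * s, (I j).mul_mem_right s haj, by simp⟩
  have := finite_of_conductor R a ha haR
  have := finite_quotient_s11 R (I i) (hR ▸ iInf_le _ i)
  have : IsArtinianRing (S ⧸ I i) := isArtinian_of_tower k inferInstance
  have h0 : ringKrullDim (S ⧸ I i) ≤ 0 := by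
    exact_mod_cast (Ring.krullDimLE_iff (n := 0)).1 inferInstance
  exact not_le_of_gt zero_lt_one (hi.trans h0)
end

section
/- Let p be a prime ideal of R with p ⊆ I_i for some index i. Then (pS) ∩ R = p, where pS denotes the ideal of S generated by p. -/
theorem mem_kPlus_of_mem (k : Type*) {S : Type*} [CommSemiring k] [CommRing S] [Algebra k S]
    {I : Ideal S} {s : S} (hs : s ∈ I) : s ∈ kPlus k I :=
  ⟨0, s, hs, by simp⟩

/-- An element `c` with `c S ⊆ R` (an element of the conductor) multiplies the extension `pS` of
an ideal `p` of `R` back into `p`. -/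
theorem conductor_mul_mem {k S : Type*} [CommSemiring k] [CommRing S] [Algebra k S]
    {R : Subalgebra k S} (p : Ideal R) {c : S} (hc : ∀ s, c * s ∈ R) {z : S}
    (hz : z ∈ p.map R.val) : ∃ y ∈ p, (y : S) = c * z := by
  -- The induction goes through only if the claim is made for all multiples of `z` in `S`.
  suffices h : ∀ s, ∃ y ∈ p, (y : S) = c * (s * z) by simpa using h 1
  induction hz using Submodule.span_induction with
  | mem x hx =>
    obtain ⟨y, hy, rfl⟩ := hx
    intro s
    exact ⟨⟨c * s, hc s⟩ * y, p.mul_mem_left _ hy, by simp [mul_assoc]⟩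
  | zero => exact fun s => ⟨0, p.zero_mem, by simp⟩
  | add x y _ _ hx hy =>
    intro s
    obtain ⟨a, ha, hax⟩ := hx s
    obtain ⟨b, hb, hby⟩ := hy s
    exact ⟨a + b, p.add_mem ha hb, by simp [hax, hby, mul_add]⟩
  | smul t x _ ih =>
    intro s
    simpa [mul_assoc] using ih (s * t)

/-- If `p` is a prime ideal of `R = ⋂ᵢ (k + Iᵢ)` with `p ⊆ Iᵢ` for some `i`,
then `(pS) ∩ R = p`, where `pS` is the ideal of `S` generated by `p`. -/
theorem stmt12 (k S : Type*) [Field k] [IsAlgClosed k] [CommRing S] [IsDomain S]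
    [Algebra k S] [Algebra.FiniteType k S]
    (m : ℕ) (I : Fin m → Ideal S)
    (hproper : ∀ i, I i ≠ ⊤) (hnz : ∀ i, I i ≠ ⊥) (hnmax : ∀ i, ¬ (I i).IsMaximal)
    (hcop : ∀ i j, i ≠ j → I i ⊔ I j = ⊤)
    (R : Subalgebra k S) (hR : R = ⨅ i, kPlus k (I i))
    (p : Ideal R) (hp : p.IsPrime)
    (i : Fin m) (hpi : ∀ x : R, x ∈ p → (x : S) ∈ I i) :
    (p.map R.val).comap R.val = p := by
  refine le_antisymm (fun z hz => ?_) Ideal.le_comap_map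
  have hz' : (z : S) ∈ p.map R.val := hz
  have hzi : (z : S) ∈ I i := (Ideal.map_le_iff_le_comap.2 hpi : p.map R.val ≤ I i) hz'
  have htop : I i ⊔ ⨅ j ∈ Finset.univ.erase i, I j = ⊤ :=
    Ideal.sup_iInf_eq_top fun j hj => hcop i j (Finset.ne_of_mem_erase hj).symm
  obtain ⟨a, ha, e, he, hae⟩ := Submodule.mem_sup.1 ((Ideal.eq_top_iff_one _).1 htop)
  have hej : ∀ j, j ≠ i → e ∈ I j := fun j hj => by
    simp only [Submodule.mem_iInf] at he
    exact he j (Finset.mem_erase.2 ⟨hj, Finset.mem_univ j⟩)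
  have heR : e ∈ R := by
    rw [hR, Algebra.mem_iInf]
    intro j
    by_cases hj : j = i
    · subst hj
      exact ⟨1, -a, (I j).neg_mem ha, by rw [map_one, ← hae]; ring⟩
    · exact mem_kPlus_of_mem k (hej j hj)
  have hep : (⟨e, heR⟩ : R) ∉ p := fun h =>
    hproper i ((Ideal.eq_top_iff_one _).2 (hae ▸ (I i).add_mem ha (hpi _ h)))
  have hc : ∀ s, (z * e : S) * s ∈ R := by
    intro s
    refine hR.ge (Algebra.mem_iInf.2 fun j => ?_)
    refine mem_kPlus_of_mem k ((I j).mul_mem_right _ ?_)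
    by_cases hj : j = i
    · subst hj
      exact (I j).mul_mem_right _ hzi
    · exact (I j).mul_mem_left _ (hej j hj)
  obtain ⟨y, hy, hyz⟩ := conductor_mul_mem p hc hz'
  have hmem : z * ⟨e, heR⟩ * z ∈ p := by
    have : z * ⟨e, heR⟩ * z = y := Subtype.ext (by simp [hyz])
    rwa [this]
  rcases hp.mem_or_mem hmem with h | h
  · exact (hp.mem_or_mem h).resolve_right hep
  · exact h
end

section
/- Suppose each I_i is a radical ideal of S. Then the map ι : Spec S → Spec R sending a prime ideal q of S to q ∩ R is surjective; that is, for every prime ideal p of R there exists a prime ideal q of S with q ∩ R = p. -/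
/-- A prime `p` of `R` not containing some `c` with `c S ⊆ R` is the contraction of the prime
`{s | c s ∈ p}` of `S`. -/
theorem exists_prime_of_conductor {k S : Type*} [CommRing k] [CommRing S] [Algebra k S]
    (R : Subalgebra k S) (p : Ideal R) (hp : p.IsPrime) (c : R)
    (hc : ∀ s : S, (c : S) * s ∈ R) (hcp : c ∉ p) :
    ∃ q : Ideal S, q.IsPrime ∧ q.comap R.val = p := by
  let f : S → R := fun s => ⟨(c : S) * s, hc s⟩
  have hfmul : ∀ s t, f s * f t = c * f (s * t) := fun s t =>
    Subtype.ext (by simp only [f, MulMemClass.mk_mul_mk, MulMemClass.coe_mul]; ring)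
  have hfR : ∀ r : R, f r = c * r := fun r => rfl
  let q : Ideal S :=
    { carrier := {s | f s ∈ p}
      zero_mem' := by
        have h : f 0 = 0 := Subtype.ext (by simp [f])
        simp [h]
      add_mem' := by
        intro a b ha hb
        have h : f (a + b) = f a + f b := Subtype.ext (by simp [f, mul_add])
        simpa only [Set.mem_ofPred_eq, h] using p.add_mem ha hb
      smul_mem' := by
        intro t s hs
        have h : c * f (t * s) ∈ p := hfmul t s ▸ p.mul_mem_left (f t) hs
        exact (hp.mem_or_mem h).resolve_left hcp }
  have hq : ∀ s, s ∈ q ↔ f s ∈ p := fun _ => Iff.rfl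
  refine ⟨q, ⟨?_, ?_⟩, ?_⟩
  · rw [Ideal.ne_top_iff_one, hq]
    have h : f 1 = c := Subtype.ext (by simp [f])
    rwa [h]
  · intro s t hst
    rw [hq] at hst
    exact hp.mem_or_mem (hfmul s t ▸ p.mul_mem_left c hst)
  · ext r
    rw [Ideal.mem_comap, hq]
    change f r ∈ p ↔ r ∈ p
    rw [hfR]
    exact ⟨fun h => (hp.mem_or_mem h).resolve_left hcp, p.mul_mem_left c⟩

/-- If `R ⊆ k + I`, then `I ∩ R` is maximal among the proper ideals of `R`, since every element of
`R` is a scalar modulo `I`. -/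
theorem eq_comap_of_comap_le {k S : Type*} [Field k] [CommRing S] [Algebra k S]
    (R : Subalgebra k S) (I : Ideal S) (hR : R ≤ kPlus k I) (p : Ideal R) (hp : p ≠ ⊤)
    (h : I.comap R.val ≤ p) : p = I.comap R.val := by
  refine le_antisymm (fun r hr => ?_) h
  obtain ⟨α, b, hb, hrb⟩ := hR r.2
  have hmem : r - algebraMap k R α ∈ p := h <| by
    have h1 : R.val (r - algebraMap k R α) = b := by
      change (r : S) - algebraMap k S α = b
      rw [hrb]; ring
    rwa [Ideal.mem_comap, h1]
  have hα : algebraMap k R α ∈ p := by simpa using p.sub_mem hr hmem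
  have hα0 : α = 0 := by
    by_contra hne
    exact hp (p.eq_top_of_isUnit_mem hα ((isUnit_iff_ne_zero.mpr hne).map (algebraMap k R)))
  have h2 : R.val r = b := by
    change (r : S) = b
    rw [hrb, hα0, map_zero, zero_add]
  rwa [Ideal.mem_comap, h2]

/-- If each `Iᵢ` is radical, then `ι : Spec S → Spec R`, `q ↦ q ∩ R`, is
surjective: every prime `p` of `R = ⋂ᵢ (k + Iᵢ)` is of the form `q ∩ R` for a prime `q`
of `S`. -/
theorem stmt13 (k S : Type*) [Field k] [IsAlgClosed k] [CommRing S] [IsDomain S]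
    [Algebra k S] [Algebra.FiniteType k S]
    (m : ℕ) (I : Fin m → Ideal S)
    (hproper : ∀ i, I i ≠ ⊤) (hnz : ∀ i, I i ≠ ⊥) (hnmax : ∀ i, ¬ (I i).IsMaximal)
    (hcop : ∀ i j, i ≠ j → I i ⊔ I j = ⊤) (hrad : ∀ i, (I i).IsRadical)
    (R : Subalgebra k S) (hR : R = ⨅ i, kPlus k (I i))
    (p : Ideal R) (hp : p.IsPrime) :
    ∃ q : Ideal S, q.IsPrime ∧ q.comap R.val = p := by
  by_cases hJ : ∃ c : R, (∀ i, (c : S) ∈ I i) ∧ c ∉ p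
  · obtain ⟨c, hc, hcp⟩ := hJ
    refine exists_prime_of_conductor R p hp c (fun s => ?_) hcp
    have hmem : (c : S) * s ∈ ⨅ i, kPlus k (I i) := Algebra.mem_iInf.mpr fun i =>
      ⟨0, c * s, (I i).mul_mem_right s (hc i), by simp⟩
    exact hR.ge hmem
  · push Not at hJ
    have hle : Finset.univ.inf (fun i => (I i).comap R.val) ≤ p := fun r hr =>
      hJ r fun i => Finset.inf_le (f := fun i => (I i).comap R.val) (Finset.mem_univ i) hr
    obtain ⟨i, -, hi⟩ := (Ideal.IsPrime.inf_le' hp).mp hle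
    have hRi : R ≤ kPlus k (I i) := hR ▸ iInf_le _ i
    obtain ⟨q, hq, hIq⟩ := Ideal.exists_le_maximal (I i) (hproper i)
    have hqR : q.comap R.val ≠ ⊤ := Ideal.comap_ne_top _ hq.ne_top
    refine ⟨q, hq.isPrime, ?_⟩
    rw [eq_comap_of_comap_le R (I i) hRi p hp.ne_top hi]
    exact eq_comap_of_comap_le R (I i) hRi _ hqR (Ideal.comap_mono hIq)
end

section
/- Suppose each I_i is a radical ideal of S. Then R = ⋂_i (k + I_i) is nonnoetherian if and only if there is some index i for which the Krull dimension of S/I_i is at least 1. -/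
section

variable {k S : Type*} [Field k] [CommRing S] [Algebra k S]

/-- A noetherian subalgebra containing a nonzero ideal of the domain `S` has `S` as a finite
module. -/
lemma finite_of_isNoetherianRing [IsDomain S] (R : Subalgebra k S) [IsNoetherianRing R]
    (J : Ideal S) (hJ : J ≠ ⊥) (hJR : ∀ x ∈ J, x ∈ R) : Module.Finite R S := by
  obtain ⟨a, haJ, ha⟩ := Submodule.exists_mem_ne_zero_of_ne_bot hJ
  let f : S →ₗ[R] R :=
    { toFun := fun s => ⟨a * s, hJR _ (J.mul_mem_right s haJ)⟩
      map_add' := fun x y => Subtype.ext (mul_add a x y)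
      map_smul' := fun r x => Subtype.ext (mul_left_comm a (r : S) x) }
  refine Module.Finite.of_injective f fun x y hxy => ?_
  exact mul_left_cancel₀ ha (congrArg Subtype.val hxy)

lemma finite_quotient_of_le_kPlus (R : Subalgebra k S) [Module.Finite R S]
    (I : Ideal S) (hRI : R ≤ kPlus k I) : Module.Finite k (S ⧸ I) := by
  classical
  obtain ⟨t, ht⟩ := Module.Finite.fg_top (R := R) (M := S)
  refine ⟨⟨t.image (Ideal.Quotient.mk I), ?_⟩⟩
  rw [eq_top_iff]
  rintro q -
  obtain ⟨s, rfl⟩ := Ideal.Quotient.mk_surjective q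
  have hs : s ∈ Submodule.span R (t : Set S) := ht ▸ Submodule.mem_top
  induction hs using Submodule.span_induction with
  | mem x hx => exact Submodule.subset_span (by simpa using ⟨x, hx, rfl⟩)
  | zero => simp
  | add x y _ _ hx hy => rw [map_add]; exact Submodule.add_mem _ hx hy
  | smul r x _ hx =>
    -- `r = α + b` with `b ∈ I` acts on `S ⧸ I` as the scalar `α`.
    obtain ⟨α, b, hb, hr⟩ := hRI r.2
    have key : Ideal.Quotient.mk I (r • x) = α • Ideal.Quotient.mk I x := by
      rw [Subalgebra.smul_def, smul_eq_mul, hr, map_mul, map_add,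
        Ideal.Quotient.eq_zero_iff_mem.mpr hb, add_zero, Algebra.smul_def]
      rfl
    rw [key]
    exact Submodule.smul_mem _ _ hx

lemma finite_of_finite_quotient (R : Subalgebra k S) (J : Ideal S) [Module.Finite k (S ⧸ J)]
    (hJR : ∀ x ∈ J, x ∈ R) : Module.Finite R S := by
  classical
  obtain ⟨t, ht⟩ := Module.Finite.fg_top (R := k) (M := S ⧸ J)
  let g : S ⧸ J → S := Function.surjInv Ideal.Quotient.mk_surjective
  have hg : ∀ q, Ideal.Quotient.mk J (g q) = q := Function.surjInv_eq _
  refine ⟨⟨insert 1 (t.image g), ?_⟩⟩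
  set N := Submodule.span R ((insert 1 (t.image g) : Finset S) : Set S) with hN
  -- Every class modulo `J` has a representative in `N`.
  have lift : ∀ q : S ⧸ J, ∃ x ∈ N, Ideal.Quotient.mk J x = q := by
    intro q
    have hq : q ∈ Submodule.span k (t : Set (S ⧸ J)) := ht ▸ Submodule.mem_top
    induction hq using Submodule.span_induction with
    | mem q hq =>
      refine ⟨g q, Submodule.subset_span ?_, hg q⟩
      rw [Finset.coe_insert, Finset.coe_image]
      exact Or.inr ⟨q, hq, rfl⟩
    | zero => exact ⟨0, N.zero_mem, map_zero _⟩
    | add p q _ _ hp hq =>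
      obtain ⟨x, hx, rfl⟩ := hp
      obtain ⟨y, hy, rfl⟩ := hq
      exact ⟨x + y, N.add_mem hx hy, map_add _ _ _⟩
    | smul α q _ hq =>
      obtain ⟨x, hx, rfl⟩ := hq
      refine ⟨algebraMap k R α • x, N.smul_mem _ hx, ?_⟩
      rw [Subalgebra.smul_def, smul_eq_mul, map_mul, Algebra.smul_def]
      rfl
  rw [eq_top_iff]
  rintro s -
  obtain ⟨x, hx, hxs⟩ := lift (Ideal.Quotient.mk J s)
  have hmem : s - x ∈ R := hJR _ (Ideal.Quotient.eq.mp hxs.symm)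
  have h1 : (1 : S) ∈ N := Submodule.subset_span (by simp)
  have h2 : s = x + (⟨s - x, hmem⟩ : R) • (1 : S) := by
    rw [Subalgebra.smul_def, smul_eq_mul]; ring
  rw [h2]
  exact N.add_mem hx (N.smul_mem _ h1)

/-- `S ⧸ ⋂ᵢ Iᵢ` embeds into the product of the `S ⧸ Iᵢ`. -/
lemma finite_quotient_iInf {m : ℕ} (I : Fin m → Ideal S)
    (h : ∀ i, Module.Finite k (S ⧸ I i)) : Module.Finite k (S ⧸ ⨅ i, I i) := by
  let f : (S ⧸ ⨅ i, I i) →ₐ[k] (∀ i, S ⧸ I i) :=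
    AlgHom.pi fun i => Ideal.Quotient.factorₐ k (iInf_le I i)
  refine Module.Finite.of_injective f.toLinearMap ?_
  rw [injective_iff_map_eq_zero]
  intro q hq
  obtain ⟨s, rfl⟩ := Ideal.Quotient.mk_surjective q
  rw [Ideal.Quotient.eq_zero_iff_mem, Ideal.mem_iInf]
  intro i
  exact Ideal.Quotient.eq_zero_iff_mem.mp (congrFun hq i)

/-- For a finitely generated `k`-algebra, finite-dimensionality is the negation of having Krull
dimension at least one. -/
lemma finite_iff_not_one_le_ringKrullDim (A : Type*) [CommRing A] [Algebra k A]
    [Algebra.FiniteType k A] : Module.Finite k A ↔ ¬ 1 ≤ ringKrullDim A := by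
  rw [Module.finite_iff_krullDimLE_zero, Ring.krullDimLE_iff, not_le]
  exact (ENat.WithBot.lt_add_one_iff (n := ringKrullDim A) (m := 0)).symm

end

/-- If each `Iᵢ` is radical, then `R = ⋂ᵢ (k + Iᵢ)` is nonnoetherian iff
`dim S/Iᵢ ≥ 1` for some `i`. -/
theorem stmt14 (k S : Type*) [Field k] [IsAlgClosed k] [CommRing S] [IsDomain S]
    [Algebra k S] [Algebra.FiniteType k S]
    (m : ℕ) (I : Fin m → Ideal S)
    (hproper : ∀ i, I i ≠ ⊤) (hnz : ∀ i, I i ≠ ⊥) (hnmax : ∀ i, ¬ (I i).IsMaximal)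
    (hcop : ∀ i j, i ≠ j → I i ⊔ I j = ⊤) (hrad : ∀ i, (I i).IsRadical)
    (R : Subalgebra k S) (hR : R = ⨅ i, kPlus k (I i)) :
    ¬ IsNoetherianRing R ↔ ∃ i, 1 ≤ ringKrullDim (S ⧸ I i) := by
  have hJR : ∀ x ∈ ⨅ i, I i, x ∈ R := by
    intro x hx
    rw [hR, Algebra.mem_iInf]
    exact fun i => ⟨0, x, (Ideal.mem_iInf.mp hx) i, by simp⟩
  have hJ : (⨅ i, I i) ≠ ⊥ := by
    -- The product of the `Iᵢ` lies in `J` and is nonzero in a domain.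
    intro h
    have h0 : ∏ i, I i = ⊥ := by
      rw [eq_bot_iff, ← h]
      exact le_iInf fun i => Ideal.prod_le_inf.trans (Finset.inf_le (Finset.mem_univ i))
    obtain ⟨i, -, hi⟩ := Finset.prod_eq_zero_iff.mp h0
    exact hnz i hi
  rw [not_iff_comm, not_exists]
  simp only [← finite_iff_not_one_le_ringKrullDim (k := k)]
  constructor
  · intro h
    have := finite_quotient_iInf I h
    have hfin := finite_of_finite_quotient R _ hJR
    have hfg := fg_of_fg_of_fg k R S Algebra.FiniteType.out hfin.fg_top
      (FaithfulSMul.algebraMap_injective R S)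
    have : Algebra.FiniteType k R := ⟨hfg⟩
    exact Algebra.FiniteType.isNoetherianRing k R
  · intro _ i
    have := finite_of_isNoetherianRing R _ hJ hJR
    exact finite_quotient_of_le_kPlus R (I i) (hR ▸ iInf_le _ i)
end

section
/- Suppose each I_i is a radical ideal of S and the Krull dimension of S/I_i is at least 1 for every i. Then S is a depiction of R; that is: (a) for every prime ideal p of R there exists a prime ideal q of S with q ∩ R = p; (b) for every maximal ideal n of S, the localization R_{n∩R} equals S_n (as subrings of the fraction field of S) if and only if R_{n∩R} is a noetherian ring; and (c) there exists at least one maximal ideal n of S with R_{n∩R} = S_n. -/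
section Helpers

variable {k S : Type*} [Field k] [CommRing S] [Algebra k S]

/-- Every element of `R` is congruent to a scalar modulo each `I i`. -/
lemma exists_scalar_sub_mem {m : ℕ} {I : Fin m → Ideal S} {R : Subalgebra k S}
    (hR : R = ⨅ i, kPlus k (I i)) (i : Fin m) {r : S} (hr : r ∈ R) :
    ∃ α : k, r - algebraMap k S α ∈ I i := by
  rw [hR, Algebra.mem_iInf] at hr
  obtain ⟨α, b, hb, rfl⟩ := hr i
  exact ⟨α, by simpa using hb⟩

lemma mem_of_mem_prod {m : ℕ} {I : Fin m → Ideal S} {R : Subalgebra k S}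
    (hR : R = ⨅ i, kPlus k (I i)) {c : S} (hc : c ∈ ∏ i, I i) : c ∈ R := by
  rw [hR, Algebra.mem_iInf]
  intro i
  have h : (∏ i, I i) ≤ I i := Ideal.prod_le_inf.trans (Finset.inf_le (Finset.mem_univ i))
  exact ⟨0, c, h hc, by simp⟩

/-- Inside `R`, the trace of `I i` is maximal, so any proper ideal above it has no other
elements. -/
lemma mem_of_le_of_ne_top {m : ℕ} {I : Fin m → Ideal S} {R : Subalgebra k S}
    (hR : R = ⨅ i, kPlus k (I i)) (i : Fin m) {p : Ideal R} (hp : p ≠ ⊤)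
    (hle : (I i).comap R.val ≤ p) {r : R} (hr : r ∈ p) : (r : S) ∈ I i := by
  obtain ⟨α, hα⟩ := exists_scalar_sub_mem hR i r.2
  by_cases h0 : α = 0
  · simpa [h0] using hα
  · exfalso
    have h1 : r - algebraMap k R α ∈ p := hle (by simpa [Ideal.mem_comap] using hα)
    have h2 : algebraMap k R α ∈ p := by simpa using p.sub_mem hr h1
    exact hp (Ideal.eq_top_of_isUnit_mem _ h2 ((IsUnit.mk0 α h0).map (algebraMap k R)))

/-- Lying over: primes not containing the conductor ideal `∏ i, I i` lift by colon with an element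
of it, and the others are traces of some `I i`, so any maximal ideal above `I i` lies over them. -/
lemma exists_prime_over {m : ℕ} {I : Fin m → Ideal S} {R : Subalgebra k S}
    (hR : R = ⨅ i, kPlus k (I i)) (hproper : ∀ i, I i ≠ ⊤) (p : Ideal R) (hp : p.IsPrime) :
    ∃ q : Ideal S, q.IsPrime ∧ q.comap R.val = p := by
  by_cases hJ : ∀ c : R, (c : S) ∈ ∏ i, I i → c ∈ p
  · have hex : ∃ i, (I i).comap R.val ≤ p := by
      by_contra! hcon
      have hx : ∀ i, ∃ x : R, (x : S) ∈ I i ∧ x ∉ p := fun i => by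
        obtain ⟨x, hx, hxp⟩ := SetLike.not_le_iff_exists.mp (hcon i)
        exact ⟨x, hx, hxp⟩
      choose x hxI hxp using hx
      have hmem := hJ (∏ i, x i) (by
        have : ((∏ i, x i : R) : S) = ∏ i, (x i : S) := map_prod R.val x Finset.univ
        rw [this]
        exact Ideal.prod_mem_prod fun i _ => hxI i)
      obtain ⟨i, -, hi⟩ := hp.prod_mem_iff.mp hmem
      exact hxp i hi
    obtain ⟨i, hi⟩ := hex
    obtain ⟨q, hq, hIq⟩ := Ideal.exists_le_maximal (I i) (hproper i)
    have hqp := hq.isPrime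
    refine ⟨q, hqp, le_antisymm (fun r hr => ?_) fun r hr => ?_⟩
    · have hne : q.comap R.val ≠ ⊤ := Ideal.comap_ne_top _ hqp.ne_top
      exact hi (mem_of_le_of_ne_top hR i hne (Ideal.comap_mono hIq) hr)
    · exact hIq (mem_of_le_of_ne_top hR i hp.ne_top hi hr)
  · push Not at hJ
    obtain ⟨c, hcJ, hcp⟩ := hJ
    have hR' : ∀ s : S, (c : S) * s ∈ R := fun s =>
      mem_of_mem_prod hR (Ideal.mul_mem_right s _ hcJ)
    let q : Ideal S :=
      { carrier := {s | (⟨c * s, hR' s⟩ : R) ∈ p}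
        zero_mem' := by
          have : (⟨c * 0, hR' 0⟩ : R) = 0 := Subtype.ext (by simp)
          simp only [Set.mem_ofPred_eq, this, p.zero_mem]
        add_mem' := fun {a b} ha hb => by
          have : (⟨c * (a + b), hR' (a + b)⟩ : R) = ⟨c * a, hR' a⟩ + ⟨c * b, hR' b⟩ :=
            Subtype.ext (by simp [mul_add])
          simp only [Set.mem_ofPred_eq, this]
          exact p.add_mem ha hb
        smul_mem' := fun s a ha => by
          -- `c` times the product is a multiple, within `R`, of `c * a`
          have : c * (⟨c * (s * a), hR' (s * a)⟩ : R) = ⟨c * s, hR' s⟩ * ⟨c * a, hR' a⟩ :=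
            Subtype.ext (by simp; ring)
          have h2 : c * (⟨c * (s * a), hR' (s * a)⟩ : R) ∈ p := by
            rw [this]; exact p.mul_mem_left _ ha
          exact (hp.mem_or_mem h2).resolve_left hcp }
    have hq : ∀ s, s ∈ q ↔ (⟨c * s, hR' s⟩ : R) ∈ p := fun s => Iff.rfl
    refine ⟨q, ⟨?_, ?_⟩, ?_⟩
    · rw [Ideal.ne_top_iff_one, hq]
      simpa using hcp
    · intro a b hab
      rw [hq] at hab
      have : (⟨c * a, hR' a⟩ : R) * ⟨c * b, hR' b⟩ = c * ⟨c * (a * b), hR' (a * b)⟩ :=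
        Subtype.ext (by simp; ring)
      exact hp.mem_or_mem (this ▸ p.mul_mem_left c hab)
    · ext r
      have : (⟨c * r, hR' r⟩ : R) = c * r := rfl
      rw [Ideal.mem_comap, Subalgebra.coe_val, hq, this]
      exact ⟨fun h => (hp.mem_or_mem h).resolve_left hcp, p.mul_mem_left c⟩

/-- Away from the conductor, multiplying numerator and denominator by an element of it moves both
into `R`. -/
lemma locOf_eq_of_not_le [IsDomain S] {m : ℕ} {I : Fin m → Ideal S} {R : Subalgebra k S}
    (hR : R = ⨅ i, kPlus k (I i)) {n : Ideal S} (hn : n.IsPrime) (h : ¬ ∏ i, I i ≤ n) :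
    locOf R n = locSAt S n := by
  obtain ⟨c, hc, hcn⟩ := SetLike.not_le_iff_exists.mp h
  ext x
  constructor
  · rintro ⟨a, b, -, -, hb, rfl⟩
    exact ⟨a, b, hb, rfl⟩
  · rintro ⟨a, b, hb, rfl⟩
    refine ⟨c * a, c * b, mem_of_mem_prod hR (Ideal.mul_mem_right _ _ hc),
      mem_of_mem_prod hR (Ideal.mul_mem_right _ _ hc), fun hcb => ?_, ?_⟩
    · exact (hn.mem_or_mem hcb).elim hcn hb
    · have hc0 : algebraMap S (FractionRing S) c ≠ 0 := by
        intro h0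
        rw [map_eq_zero_iff _ (IsFractionRing.injective S (FractionRing S))] at h0
        exact hcn (h0 ▸ n.zero_mem)
      rw [map_mul, map_mul, mul_div_mul_left _ _ hc0]

/-- If the two localizations agree in the fraction field, the canonical map between them is
bijective, and `S_n` is noetherian. -/
lemma isNoetherianRing_of_locOf_eq [IsDomain S] [IsNoetherianRing S] (R : Subalgebra k S)
    (n : Ideal S) [hn : n.IsPrime] (h : locOf R n = locSAt S n) :
    IsNoetherianRing (Localization.AtPrime (n.comap R.val)) := by
  have hinjS : Function.Injective (algebraMap S (Localization.AtPrime n)) :=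
    IsLocalization.injective _ n.primeCompl_le_nonZeroDivisors
  let f := Localization.localRingHom (n.comap R.val) n (R.val : R →+* S) rfl
  have hf : ∀ (a : R) (b : (n.comap R.val).primeCompl),
      f (IsLocalization.mk' _ a b) * algebraMap S _ ((b : R) : S) = algebraMap S _ (a : S) := by
    intro a b
    have h1 := congrArg f (IsLocalization.mk'_spec (Localization.AtPrime (n.comap R.val)) a b)
    have h2 : ∀ x : R, f (algebraMap R _ x) = algebraMap S _ (x : S) :=
      Localization.localRingHom_to_map (n.comap R.val) n (R.val : R →+* S) rfl
    rwa [map_mul, h2, h2] at h1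
  have hbij : Function.Bijective f := by
    constructor
    · rw [injective_iff_map_eq_zero]
      intro x hx
      obtain ⟨a, b, rfl⟩ := IsLocalization.exists_mk'_eq (n.comap R.val).primeCompl x
      have h1 := hf a b
      rw [hx, zero_mul] at h1
      have h2 : (a : S) = 0 := hinjS (by rw [← h1, map_zero])
      have h3 : a = 0 := Subtype.ext h2
      rw [h3, IsLocalization.mk'_zero]
    · intro y
      obtain ⟨a, b, rfl⟩ := IsLocalization.exists_mk'_eq n.primeCompl y
      have hb0 : (b : S) ≠ 0 := fun h0 => b.2 (h0 ▸ n.zero_mem)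
      have hmem : algebraMap S (FractionRing S) a / algebraMap S (FractionRing S) b ∈
          locOf R n := h ▸ ⟨a, b, b.2, rfl⟩
      obtain ⟨a', b', ha', hb', hbn, heq⟩ := hmem
      have hb0' : b' ≠ 0 := fun h0 => hbn (h0 ▸ n.zero_mem)
      have hinj := IsFractionRing.injective S (FractionRing S)
      rw [div_eq_div_iff ((map_ne_zero_iff _ hinj).mpr hb0) ((map_ne_zero_iff _ hinj).mpr hb0'),
        ← map_mul, ← map_mul] at heq
      have heq' : a * b' = a' * b := hinj heq
      refine ⟨IsLocalization.mk' _ (⟨a', ha'⟩ : R)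
        (⟨⟨b', hb'⟩, hbn⟩ : (n.comap R.val).primeCompl), ?_⟩
      have h1 := hf ⟨a', ha'⟩ ⟨⟨b', hb'⟩, hbn⟩
      rw [eq_comm, IsLocalization.mk'_eq_iff_eq_mul]
      apply mul_right_cancel₀ ((map_ne_zero_iff _ hinjS).mpr hb0')
      rw [← map_mul, heq', map_mul, mul_right_comm]
      exact congrArg (· * _) h1.symm
  exact isNoetherianRing_of_ringEquiv _ (RingEquiv.ofBijective f hbij).symm

/-- If `R_{n ∩ R}` is noetherian, the chain of ideals generated by `c, cs, …, cs^j` stabilizes,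
which yields an algebraic relation for `s` whose leading coefficient is a unit at `n`. -/
lemma exists_relation [IsDomain S] (R : Subalgebra k S) (n : Ideal S) [hn : n.IsPrime]
    (hN : IsNoetherianRing (Localization.AtPrime (n.comap R.val)))
    {c : S} (hc0 : c ≠ 0) (hc : ∀ s, c * s ∈ R) (s : S) :
    ∃ (N : ℕ) (b : S) (r : Fin N → S), b ∈ R ∧ b ∉ n ∧ (∀ j, r j ∈ R) ∧
      b * s ^ N = ∑ j, r j * s ^ (j : ℕ) := by
  let P := n.comap R.val
  let T := Localization.AtPrime P
  let g : ℕ → R := fun j => ⟨c * s ^ j, hc _⟩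
  let f : ℕ → T := fun j => algebraMap R T (g j)
  let A : ℕ →o Ideal T :=
    { toFun := fun N => Ideal.span (Set.range fun j : Fin N => f j)
      monotone' := fun a b hab => Ideal.span_mono (by
        rintro _ ⟨j, rfl⟩
        exact ⟨Fin.castLE hab j, rfl⟩) }
  obtain ⟨N, hNs⟩ := monotone_stabilizes_iff_noetherian.mpr hN A
  have hfN : f N ∈ A N := by
    rw [hNs (N + 1) (Nat.le_succ N)]
    exact Ideal.subset_span ⟨Fin.last N, rfl⟩
  obtain ⟨t, ht⟩ := (Submodule.mem_span_range_iff_exists_fun T).mp hfN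
  obtain ⟨b, hb⟩ := IsLocalization.exist_integer_multiples_of_finite P.primeCompl t
  choose r hr using hb
  refine ⟨N, (b : R), fun j => r j, (b : R).2, b.2, fun j => (r j).2, ?_⟩
  have hinj : Function.Injective (algebraMap R T) :=
    IsLocalization.injective _ P.primeCompl_le_nonZeroDivisors
  have hrel : (b : R) * g N = ∑ j, r j * g j := by
    apply hinj
    rw [map_mul, map_sum]
    change _ * f N = _
    rw [← ht, Finset.mul_sum]
    refine Finset.sum_congr rfl fun j _ => ?_
    rw [map_mul, hr j, smul_eq_mul, Algebra.smul_def (b : R) (t j), mul_assoc]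
  have h2 := congrArg R.val hrel
  rw [map_mul, map_sum] at h2
  apply mul_left_cancel₀ hc0
  rw [Finset.mul_sum]
  calc c * ((b : R) * s ^ N) = (b : R) * (c * s ^ N) := by ring
    _ = ∑ j, R.val (r j * g j) := h2
    _ = _ := Finset.sum_congr rfl fun j _ => by simp [g]; ring

/-- At a maximal ideal containing `I i` the localization of `R` is not noetherian: reducing the
relations of `exists_relation` modulo `I i`, where `R` becomes `k`, makes `S ⧸ I i` algebraic
over `k`, hence zero-dimensional. -/
lemma not_isNoetherianRing [IsDomain S] [Algebra.FiniteType k S] {m : ℕ} {I : Fin m → Ideal S}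
    {R : Subalgebra k S} (hR : R = ⨅ i, kPlus k (I i)) (hnz : ∀ i, I i ≠ ⊥)
    (i : Fin m) (hdim : 1 ≤ ringKrullDim (S ⧸ I i))
    (n : Ideal S) [hn : n.IsPrime] (hin : I i ≤ n) :
    ¬ IsNoetherianRing (Localization.AtPrime (n.comap R.val)) := by
  intro hN
  have hJ : ∏ i, I i ≠ ⊥ := by
    rw [← Ideal.zero_eq_bot, Finset.prod_ne_zero_iff]
    exact fun i _ => hnz i
  obtain ⟨c, hcJ, hc0⟩ := Submodule.exists_mem_ne_zero_of_ne_bot hJ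
  have hint : Algebra.IsIntegral k (S ⧸ I i) := by
    refine ⟨fun x => ?_⟩
    obtain ⟨s, rfl⟩ := Ideal.Quotient.mk_surjective x
    obtain ⟨N, b, r, hb, hbn, hr, hrel⟩ := exists_relation R n hN hc0
      (fun s => mem_of_mem_prod hR (Ideal.mul_mem_right s _ hcJ)) s
    obtain ⟨β, hβ⟩ := exists_scalar_sub_mem hR i hb
    choose ρ hρ using fun j => exists_scalar_sub_mem hR i (hr j)
    have hβ0 : β ≠ 0 := by
      rintro rfl
      exact hbn (hin (by simpa using hβ))
    have hb' : Ideal.Quotient.mk (I i) b = algebraMap k _ β := Ideal.Quotient.eq.mpr hβ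
    have hr' : ∀ j, Ideal.Quotient.mk (I i) (r j) = algebraMap k _ (ρ j) :=
      fun j => Ideal.Quotient.eq.mpr (hρ j)
    have hrel' := congrArg (Ideal.Quotient.mk (I i)) hrel
    simp only [map_mul, map_sum, map_pow, hb', hr'] at hrel'
    refine IsAlgebraic.isIntegral ⟨Polynomial.C β * Polynomial.X ^ N -
      ∑ j : Fin N, Polynomial.C (ρ j) * Polynomial.X ^ (j : ℕ), fun h0 => hβ0 ?_, ?_⟩
    · have h1 := congrArg (fun q => Polynomial.coeff q N) h0
      have h2 : ∀ j : Fin N, N ≠ (j : ℕ) := fun j => j.2.ne'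
      simpa [Polynomial.finsetSum_coeff, Polynomial.coeff_X_pow, h2] using h1
    · simp [hrel']
  have hfin : Module.Finite k (S ⧸ I i) := Algebra.IsIntegral.finite
  have hart : IsArtinianRing (S ⧸ I i) := IsArtinianRing.of_finite k _
  have h0 : ringKrullDim (S ⧸ I i) ≤ 0 :=
    Ring.krullDimLE_iff.mp inferInstance
  exact absurd (hdim.trans h0) (by decide)

end Helpers

/-- If each `Iᵢ` is radical with `dim S/Iᵢ ≥ 1`, then `S` is a depiction of
`R = ⋂ᵢ (k + Iᵢ)`: (a) `q ↦ q ∩ R` is surjective `Spec S → Spec R`; (b) for every maximal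
ideal `n` of `S`, `R_{n∩R} = S_n` (inside `Frac S`) iff `R_{n∩R}` is noetherian; and
(c) some maximal ideal `n` of `S` satisfies `R_{n∩R} = S_n`. -/
theorem stmt15 (k S : Type*) [Field k] [IsAlgClosed k] [CommRing S] [IsDomain S]
    [Algebra k S] [Algebra.FiniteType k S]
    (m : ℕ) (I : Fin m → Ideal S)
    (hproper : ∀ i, I i ≠ ⊤) (hnz : ∀ i, I i ≠ ⊥) (hnmax : ∀ i, ¬ (I i).IsMaximal)
    (hcop : ∀ i j, i ≠ j → I i ⊔ I j = ⊤) (hrad : ∀ i, (I i).IsRadical)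
    (hdim : ∀ i, 1 ≤ ringKrullDim (S ⧸ I i))
    (R : Subalgebra k S) (hR : R = ⨅ i, kPlus k (I i)) :
    (∀ p : Ideal R, p.IsPrime → ∃ q : Ideal S, q.IsPrime ∧ q.comap R.val = p) ∧
    (∀ (n : Ideal S) (hn : n.IsMaximal),
      locOf R n = locSAt S n ↔
      IsNoetherianRing
        (Localization
          (@Ideal.primeCompl _ _ (n.comap R.val)
            (Ideal.IsPrime.comap R.val (hK := hn.isPrime))))) ∧
    (∃ n : Ideal S, n.IsMaximal ∧ locOf R n = locSAt S n) := by
  have hNS : IsNoetherianRing S := Algebra.FiniteType.isNoetherianRing k S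
  refine ⟨fun p hp => exists_prime_over hR hproper p hp, fun n hn => ?_, ?_⟩
  · have hnp := hn.isPrime
    refine ⟨fun h => isNoetherianRing_of_locOf_eq R n h, fun h => ?_⟩
    refine locOf_eq_of_not_le hR hnp fun hle => ?_
    obtain ⟨i, -, hi⟩ := hnp.prod_le.mp hle
    exact not_isNoetherianRing hR hnz i (hdim i) n hi h
  · have hJ : ∏ i, I i ≠ ⊥ := by
      rw [← Ideal.zero_eq_bot, Finset.prod_ne_zero_iff]
      exact fun i _ => hnz i
    obtain ⟨c, hcJ, hc0⟩ := Submodule.exists_mem_ne_zero_of_ne_bot hJ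
    have hjac : IsJacobsonRing S := isJacobsonRing_of_finiteType (A := k)
    have hbot : (⊥ : Ideal S).jacobson = ⊥ :=
      isJacobsonRing_iff_prime_eq.mp hjac ⊥ Ideal.isPrime_bot
    have hcj : c ∉ (⊥ : Ideal S).jacobson := by rw [hbot]; simpa using hc0
    rw [Ideal.jacobson, Submodule.mem_sInf] at hcj
    push Not at hcj
    obtain ⟨n, ⟨-, hn⟩, hcn⟩ := hcj
    exact ⟨n, hn, locOf_eq_of_not_le hR hn.isPrime fun hle => hcn (hle hcJ)⟩
end
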